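/- Suppose [p,q] is an excursion of Ȳ contained in [τ_l, τ_{l+1}] for some l ≥ 0 and q = τ_{l+1} − 2 (it is the unique excursion of Ȳ in [τ_l, τ_{l+1}]). Then S_k ≠ 0 for every k with τ_l < k < τ_{l+1}; that is, the first zero of S after τ_l is τ_{l+1}. -/

import Mathlib

noncomputable section

/-- The walk `S` associated with the sign sequence `X : {1,2,…} → {−1,1}`:
`S 0 = 0`, `S n = X 1 + ⋯ + X n`. -/
def cvWalk (X : ℕ → ℤ) (n : ℕ) : ℤ := ∑ j ∈ Finset.Icc 1 n, X j

/-- The crossing times of `S`: `τ 0 = 0` and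
`τ (l+1) = min {i > τ l : S (i-1) * S (i+1) < 0}`. -/
def cvTau (X : ℕ → ℤ) : ℕ → ℕ
  | 0 => 0
  | l + 1 => sInf {i : ℕ | cvTau X l < i ∧ cvWalk X (i - 1) * cvWalk X (i + 1) < 0}

/-- The increments of the Csaki–Vincze transform `S̄ = T(S)`:
`X̄ j = Σ_{l ≥ 0} (−1)^(l+1) · X 1 · X (j+1) · 1_{τ l + 1 ≤ j ≤ τ (l+1)}`
(the sum may be truncated to `l ≤ j` since `l ≤ τ l` whenever `τ l + 1 ≤ j`). -/
def cvXbar (X : ℕ → ℤ) (j : ℕ) : ℤ :=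
  ∑ l ∈ Finset.range (j + 1),
    (-1 : ℤ) ^ (l + 1) * X 1 * X (j + 1) *
      (if cvTau X l + 1 ≤ j ∧ j ≤ cvTau X (l + 1) then 1 else 0)

/-- The Csaki–Vincze transform `S̄ = T(S)`. -/
def cvSbar (X : ℕ → ℤ) (n : ℕ) : ℤ := ∑ j ∈ Finset.Icc 1 n, cvXbar X j

/-- `Ȳ`-type process of a walk `f`: `max_{0 ≤ k ≤ n} f k − f n`. -/
def cvYof (f : ℕ → ℤ) (n : ℕ) : ℤ :=
  (Finset.range (n + 1)).sup' Finset.nonempty_range_add_one f - f n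

/-- `Ȳ n = max_{0 ≤ k ≤ n} S̄ k − S̄ n`. -/
def cvYbar (X : ℕ → ℤ) (n : ℕ) : ℤ := cvYof (cvSbar X) n

/-- `[p, q]` is an excursion of `Ȳ`: `Ȳ p = Ȳ (p−1) = Ȳ q = Ȳ (q+1) = 0`
(with the convention `Ȳ (−1) = 0`, which is handled by truncated subtraction since
`Ȳ 0 = 0` anyway) and for every `p ≤ j < q`, `Ȳ j = 0` implies `Ȳ (j+1) = 1`. -/
def cvIsExcursion (X : ℕ → ℤ) (p q : ℕ) : Prop :=
  p < q ∧ cvYbar X p = 0 ∧ cvYbar X (p - 1) = 0 ∧ cvYbar X q = 0 ∧ cvYbar X (q + 1) = 0 ∧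
    ∀ j, p ≤ j → j < q → cvYbar X j = 0 → cvYbar X (j + 1) = 1

theorem cvWalk_succ (X : ℕ → ℤ) (n : ℕ) : cvWalk X (n + 1) = cvWalk X n + X (n + 1) := by
  unfold cvWalk
  rw [Finset.sum_Icc_succ_top (by omega)]

theorem cvSbar_succ (X : ℕ → ℤ) (n : ℕ) : cvSbar X (n + 1) = cvSbar X n + cvXbar X (n + 1) := by
  unfold cvSbar
  rw [Finset.sum_Icc_succ_top (by omega)]

theorem cvTau_mem (X : ℕ → ℤ)
    (hinf : {i : ℕ | 1 ≤ i ∧ cvWalk X (i - 1) * cvWalk X (i + 1) < 0}.Infinite) (l : ℕ) :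
    cvTau X l < cvTau X (l + 1) ∧
      cvWalk X (cvTau X (l + 1) - 1) * cvWalk X (cvTau X (l + 1) + 1) < 0 := by
  have hne : {i : ℕ | cvTau X l < i ∧ cvWalk X (i - 1) * cvWalk X (i + 1) < 0}.Nonempty := by
    obtain ⟨i, hi, hlt⟩ := hinf.exists_gt (cvTau X l)
    exact ⟨i, hlt, hi.2⟩
  have := Nat.sInf_mem hne
  simpa only [cvTau, Set.mem_setOf_eq] using this

theorem cvTau_not (X : ℕ → ℤ) (l k : ℕ) (h1 : cvTau X l < k) (h2 : k < cvTau X (l + 1)) :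
    0 ≤ cvWalk X (k - 1) * cvWalk X (k + 1) := by
  by_contra h
  have : cvTau X (l + 1) ≤ k := by
    simp only [cvTau]
    exact Nat.sInf_le ⟨h1, by omega⟩
  omega

theorem cv_pos (X : ℕ → ℤ) (hX : ∀ j, 1 ≤ j → X j = 1 ∨ X j = -1) (l : ℕ) (c : ℤ)
    (hc : c = 1 ∨ c = -1) (h1 : cvWalk X (cvTau X l + 1) = c) (d : ℕ)
    (hd : cvTau X l + 1 + d ≤ cvTau X (l + 1)) :
    0 ≤ c * cvWalk X (cvTau X l + 1 + d) ∧
      (cvWalk X (cvTau X l + 1 + d) = 0 → cvWalk X (cvTau X l + d) = c) := by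
  induction d with
  | zero =>
    simp only [Nat.add_zero, h1]
    rcases hc with rfl | rfl <;> simp
  | succ d ih =>
    obtain ⟨i1, i2⟩ := ih (by omega)
    have hn := cvTau_not X l (cvTau X l + 1 + d) (by omega) (by omega)
    have e : cvTau X l + 1 + d - 1 = cvTau X l + d := by omega
    have e2 : cvTau X l + (d + 1) = cvTau X l + 1 + d := by omega
    have s := cvWalk_succ X (cvTau X l + 1 + d)
    have x := hX (cvTau X l + 1 + d + 1) (by omega)
    rw [e] at hn
    rw [e2, ← Nat.add_assoc]
    generalize cvWalk X (cvTau X l + 1 + d + 1) = u at *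
    generalize cvWalk X (cvTau X l + 1 + d) = v at *
    generalize cvWalk X (cvTau X l + d) = w at *
    generalize X (cvTau X l + 1 + d + 1) = y at *
    by_cases hv : v = 0
    · have hw := i2 hv
      subst hw
      rcases hc with rfl | rfl <;> constructor <;> omega
    · rcases hc with rfl | rfl <;> constructor <;> omega

theorem cv_cross (X : ℕ → ℤ) (hX : ∀ j, 1 ≤ j → X j = 1 ∨ X j = -1)
    (hinf : {i : ℕ | 1 ≤ i ∧ cvWalk X (i - 1) * cvWalk X (i + 1) < 0}.Infinite) (l : ℕ) (c : ℤ)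
    (hc : c = 1 ∨ c = -1) (h1 : cvWalk X (cvTau X l + 1) = c) :
    cvWalk X (cvTau X (l + 1)) = 0 ∧ cvWalk X (cvTau X (l + 1) - 1) = c ∧
      cvWalk X (cvTau X (l + 1) + 1) = -c := by
  obtain ⟨hlt, hm⟩ := cvTau_mem X hinf l
  obtain ⟨d, hd⟩ := Nat.exists_eq_add_of_le (Nat.succ_le_of_lt hlt)
  have hp := cv_pos X hX l c hc h1 d (by omega)
  rw [Nat.succ_eq_add_one] at hd
  rw [hd] at hm ⊢
  have e : cvTau X l + 1 + d - 1 = cvTau X l + d := by omega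
  rw [e] at hm ⊢
  have s := cvWalk_succ X (cvTau X l + 1 + d)
  have s2 := cvWalk_succ X (cvTau X l + d)
  have x := hX (cvTau X l + 1 + d + 1) (by omega)
  have x2 := hX (cvTau X l + d + 1) (by omega)
  have e2 : cvTau X l + d + 1 = cvTau X l + 1 + d := by omega
  rw [e2] at s2 x2
  obtain ⟨_, hp⟩ := hp
  generalize cvWalk X (cvTau X l + 1 + d + 1) = u at *
  generalize cvWalk X (cvTau X l + 1 + d) = v at *
  generalize cvWalk X (cvTau X l + d) = w at *
  have hv : v = 0 := by
    rcases mul_neg_iff.1 hm with h | h <;> omega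
  have hw := hp hv
  refine ⟨hv, hw, ?_⟩
  subst hw
  rcases hc with rfl | rfl <;> omega

theorem cv_sign (X : ℕ → ℤ) (hX : ∀ j, 1 ≤ j → X j = 1 ∨ X j = -1) (l : ℕ) :
    (-1) ^ l * X 1 = 1 ∨ (-1) ^ l * X 1 = -1 := by
  rcases neg_one_pow_eq_or ℤ l with h | h <;> rcases hX 1 le_rfl with h' | h' <;> simp [h, h']

theorem cv_start (X : ℕ → ℤ) (hX : ∀ j, 1 ≤ j → X j = 1 ∨ X j = -1)
    (hinf : {i : ℕ | 1 ≤ i ∧ cvWalk X (i - 1) * cvWalk X (i + 1) < 0}.Infinite) (l : ℕ) :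
    cvWalk X (cvTau X l + 1) = (-1) ^ l * X 1 := by
  induction l with
  | zero => simp [cvTau, cvWalk]
  | succ l ih =>
    rw [(cv_cross X hX hinf l _ (cv_sign X hX l) ih).2.2]
    ring

theorem cv_Xbar (X : ℕ → ℤ)
    (hinf : {i : ℕ | 1 ≤ i ∧ cvWalk X (i - 1) * cvWalk X (i + 1) < 0}.Infinite) (l j : ℕ)
    (h1 : cvTau X l < j) (h2 : j ≤ cvTau X (l + 1)) :
    cvXbar X j = (-1 : ℤ) ^ (l + 1) * X 1 * X (j + 1) := by
  have hm : StrictMono (cvTau X) := strictMono_nat_of_lt_succ fun l => (cvTau_mem X hinf l).1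
  unfold cvXbar
  rw [Finset.sum_eq_single l]
  · rw [if_pos ⟨h1, h2⟩, mul_one]
  · intro m _ hne
    rw [if_neg, mul_zero]
    rintro ⟨a, b⟩
    rcases lt_or_gt_of_ne hne with h | h
    · have := hm.monotone (show m + 1 ≤ l from h)
      omega
    · have := hm.monotone (show l + 1 ≤ m from h)
      omega
  · intro h
    have := hm.id_le l
    simp only [id, Finset.mem_range] at *
    omega

theorem cv_rel (X : ℕ → ℤ)
    (hinf : {i : ℕ | 1 ≤ i ∧ cvWalk X (i - 1) * cvWalk X (i + 1) < 0}.Infinite) (l d : ℕ)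
    (h : cvTau X l + d ≤ cvTau X (l + 1)) :
    cvSbar X (cvTau X l + d) - cvSbar X (cvTau X l) =
      -((-1 : ℤ) ^ l * X 1) * (cvWalk X (cvTau X l + d + 1) - cvWalk X (cvTau X l + 1)) := by
  induction d with
  | zero => simp
  | succ d ih =>
    have ih := ih (by omega)
    rw [← Nat.add_assoc, cvSbar_succ, cvWalk_succ, cv_Xbar X hinf l _ (by omega) (by omega)]
    rw [pow_succ]
    linear_combination ih


/-- If `[p, q]` is an excursion of `Ȳ` contained in `[τ l, τ (l+1)]` with
`q = τ (l+1) − 2`, then `S k ≠ 0` for every `τ l < k < τ (l+1)`; that is, the first zero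
of `S` after `τ l` is `τ (l+1)`. -/
theorem cv_first_zero_case_ii1 (X : ℕ → ℤ) (hX : ∀ j, 1 ≤ j → X j = 1 ∨ X j = -1)
    (hinf : {i : ℕ | 1 ≤ i ∧ cvWalk X (i - 1) * cvWalk X (i + 1) < 0}.Infinite)
    (l p q : ℕ) (hexc : cvIsExcursion X p q)
    (hp : cvTau X l ≤ p) (hq : q ≤ cvTau X (l + 1)) (hq2 : q + 2 = cvTau X (l + 1)) :
    (∀ k, cvTau X l < k → k < cvTau X (l + 1) → cvWalk X k ≠ 0) ∧
      cvWalk X (cvTau X (l + 1)) = 0 := by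
  have hc := cv_sign X hX l
  have hs := cv_start X hX hinf l
  obtain ⟨z, hb, _⟩ := cv_cross X hX hinf l _ hc hs
  refine ⟨?_, z⟩
  intro k hk1 hk2 hk0
  obtain ⟨hpq, _, _, hY, _⟩ := hexc
  obtain ⟨d, rfl⟩ := Nat.exists_eq_add_of_le hk1
  obtain ⟨e, he⟩ := Nat.exists_eq_add_of_le (show cvTau X l ≤ q by omega)
  have r1 := cv_rel X hinf l d (by omega)
  have r2 := cv_rel X hinf l e (by omega)
  rw [← he] at r2
  have hle : cvSbar X (cvTau X l + d) ≤ cvSbar X q := by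
    have := Finset.le_sup' (cvSbar X) (Finset.mem_range.2 (show cvTau X l + d < q + 1 by omega))
    unfold cvYbar cvYof at hY
    omega
  rw [show cvTau X (l + 1) - 1 = q + 1 by omega] at hb
  rw [show (cvTau X l).succ + d = cvTau X l + d + 1 by omega] at hk0
  rw [hb, hs] at r2
  rw [hk0, hs] at r1
  rcases hc with h | h <;> rw [h] at r1 r2 <;> omega
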